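/- Let n be an even square-free positive integer. Then every orbit of the Hecke group H(λ₄) acting on Q*(√-n) contains either a purely imaginary element or a totally negative quadruplet, but not both; moreover, the purely imaginary elements of an orbit, if any exist, form the pair {α, -1/(2α)} for some purely imaginary α (so the orbit contains a unique such pair), and a totally negative quadruplet contained in an orbit, if it exists, is unique. -/

import Mathlib

open Complex

/-- The set `Q*(√-n)` of complex numbers `(a + √n·i)/c` with `a, c ∈ ℤ`,
`c` even and nonzero, and `c ∣ a² + n`. -/
def Qstar (n : ℕ) : Set ℂ :=
  {z | ∃ a c : ℤ, c ≠ 0 ∧ 2 ∣ c ∧ c ∣ (a ^ 2 + (n : ℤ)) ∧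
    z = ((a : ℂ) + Real.sqrt n * Complex.I) / (c : ℂ)}

/-- The Hecke transformation `x(z) = -1/(2z)`. -/
noncomputable def heckeX (z : ℂ) : ℂ := -1 / (2 * z)

/-- The Hecke transformation `y(z) = -1/(2(z+1))`. -/
noncomputable def heckeY (z : ℂ) : ℂ := -1 / (2 * (z + 1))

/-- One step of the Hecke group action. -/
noncomputable def heckeStep (z w : ℂ) : Prop := w = heckeX z ∨ w = heckeY z

/-- Two elements lie in the same orbit if they are related by the equivalence
relation on `Q*(√-n)` generated by `z ~ x(z)` and `z ~ y(z)`. -/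
def sameOrbit (n : ℕ) (z w : ℂ) : Prop :=
  Relation.EqvGen (fun u v => u ∈ Qstar n ∧ v ∈ Qstar n ∧ heckeStep u v) z w

/-- The quadruplet `Q_α = {α, y(α), y²(α), y³(α)}`. -/
noncomputable def quad (α : ℂ) : Set ℂ :=
  {α, heckeY α, heckeY (heckeY α), heckeY (heckeY (heckeY α))}

/-- The orbit relation on the subtype `Q*(√-n)`. -/
def orbitRel (n : ℕ) (u v : {z : ℂ // z ∈ Qstar n}) : Prop :=
  sameOrbit n u.1 v.1

/-- `E_i(n)`: the number of positive even integers `C` dividing `i² + n`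
with `2(i²+n)/C + C ≤ 3i`. -/
def Efun (i n : ℕ) : ℕ :=
  ((i ^ 2 + n).divisors.filter (fun C => 2 ∣ C ∧ 2 * (i ^ 2 + n) / C + C ≤ 3 * i)).card

/-!
The action is that of a free product of a group of order 2 and a group of order 4, generated by `x`
and `y`. Off the real line, the pairs `{z, x(z)}` and the quadruplets `Q_z`, joined whenever they
share the point `z`, form a graph whose connected components correspond to the orbits. Orient the
edge `z` from the pair to the quadruplet if `Re z < 0` and the other way if `0 ≤ Re z`. As `x`
reverses the sign of the real part and a quadruplet has at most one member with `0 ≤ Re z`, every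
vertex has at most one outgoing edge, so a component contains at most one sink. The sinks are
exactly the purely imaginary pairs and the totally negative quadruplets.

A sink exists because the hyperbolic distance to the fixed point of `x` in the half-plane of `z` is
invariant under `x`, strictly decreases when a quadruplet member moves to the one with `0 ≤ Re z`,
and on `Q*(√-n)` takes values in a discrete set.
-/

section HeckeTransformations

-- At `z = 0` this holds because division by zero makes `heckeX 0 = 0`.
theorem heckeX_heckeX (z : ℂ) : heckeX (heckeX z) = z := by
  rcases eq_or_ne z 0 with rfl | hz
  · simp [heckeX]
  · simp only [heckeX]
    field_simp

theorem heckeY_eq_heckeX_add_one (z : ℂ) : heckeY z = heckeX (z + 1) := rfl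

theorem heckeX_heckeY (z : ℂ) : heckeX (heckeY z) = z + 1 :=
  heckeX_heckeX (z + 1)

theorem heckeX_eq_neg_inv_div_two (z : ℂ) : heckeX z = -z⁻¹ / 2 := by
  rw [heckeX]
  ring

theorem heckeX_re (z : ℂ) : (heckeX z).re = -z.re / (2 * normSq z) := by
  rw [heckeX_eq_neg_inv_div_two, div_ofNat_re, neg_re, inv_re]
  ring

theorem heckeX_im (z : ℂ) : (heckeX z).im = z.im / (2 * normSq z) := by
  rw [heckeX_eq_neg_inv_div_two, div_ofNat_im, neg_im, inv_im]
  ring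

theorem normSq_heckeX (z : ℂ) : normSq (heckeX z) = 1 / (4 * normSq z) := by
  rw [heckeX_eq_neg_inv_div_two, normSq_div, normSq_neg, normSq_inv, normSq_ofNat]
  ring

theorem normSq_pos_of_im_ne_zero {z : ℂ} (hz : z.im ≠ 0) : 0 < normSq z :=
  normSq_pos.2 fun h => hz (by rw [h, zero_im])

theorem heckeX_im_ne_zero {z : ℂ} (hz : z.im ≠ 0) : (heckeX z).im ≠ 0 := by
  rw [heckeX_im]
  exact div_ne_zero hz (mul_pos two_pos (normSq_pos_of_im_ne_zero hz)).ne'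

theorem heckeY_im_ne_zero {z : ℂ} (hz : z.im ≠ 0) : (heckeY z).im ≠ 0 :=
  heckeX_im_ne_zero (by simpa using hz)

theorem heckeX_re_neg_iff {z : ℂ} : (heckeX z).re < 0 ↔ 0 < z.re := by
  rcases eq_or_ne z 0 with rfl | hz
  · simp [heckeX]
  · rw [heckeX_re, div_lt_iff₀ (mul_pos two_pos (normSq_pos.2 hz)), zero_mul, neg_lt_zero]

theorem heckeX_re_eq_zero_iff {z : ℂ} : (heckeX z).re = 0 ↔ z.re = 0 := by
  rcases eq_or_ne z 0 with rfl | hz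
  · simp [heckeX]
  · simp [heckeX_re, hz]

theorem two_mul_add_one_ne_zero_of_im_ne_zero {z : ℂ} (hz : z.im ≠ 0) : 2 * z + 1 ≠ 0 :=
  fun h => hz (by simpa using congrArg im h)

theorem heckeY_heckeY {z : ℂ} (hz : z.im ≠ 0) :
    heckeY (heckeY z) = -(z + 1) / (2 * z + 1) := by
  have h₁ : z + 1 ≠ 0 := fun h => hz (by simpa using congrArg im h)
  have h₂ : 2 * z + 1 ≠ 0 := two_mul_add_one_ne_zero_of_im_ne_zero hz
  have h₃ : -1 + 2 * (z + 1) ≠ 0 := by convert h₂ using 1; ring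
  simp only [heckeY]
  field_simp
  ring

theorem heckeY_iterate_four {z : ℂ} (hz : z.im ≠ 0) :
    heckeY (heckeY (heckeY (heckeY z))) = z := by
  have hne : 2 * z + 1 ≠ 0 := two_mul_add_one_ne_zero_of_im_ne_zero hz
  have hnum : -(-(z + 1) / (2 * z + 1) + 1) = -z / (2 * z + 1) := by
    rw [div_add_one hne]
    ring
  have hden : 2 * (-(z + 1) / (2 * z + 1)) + 1 = -1 / (2 * z + 1) := by
    rw [← mul_div_assoc, div_add_one hne]
    ring
  rw [heckeY_heckeY (heckeY_im_ne_zero (heckeY_im_ne_zero hz)), heckeY_heckeY hz, hnum, hden,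
    div_div_div_cancel_right₀ hne, div_neg, div_one, neg_neg]

theorem heckeY_iterate_three {z : ℂ} (hz : z.im ≠ 0) :
    heckeY (heckeY (heckeY z)) = heckeX z - 1 := by
  rw [eq_sub_iff_add_eq, ← heckeX_heckeY, heckeY_iterate_four hz]

end HeckeTransformations

section Height

/-- The height `(1 + 2|z|²) / |Im z|` of a non-real point, which measures its distance to the fixed
points `±i/√2` of `heckeX`: on the upper half-plane it is `2√2` times the hyperbolic cosine of the
distance to `i/√2`. It serves as the descent measure of the reduction, and is `0` on the real
line. -/
noncomputable def heckeHeight (z : ℂ) : ℝ := (1 + 2 * normSq z) / |z.im|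

theorem heckeHeight_heckeX (z : ℂ) : heckeHeight (heckeX z) = heckeHeight z := by
  rcases eq_or_ne z 0 with rfl | hz
  · simp [heckeX]
  · have hpos : 0 < normSq z := normSq_pos.2 hz
    rw [heckeHeight, heckeHeight, heckeX_im, normSq_heckeX, abs_div,
      abs_of_pos (mul_pos two_pos hpos)]
    field_simp
    ring

theorem heckeHeight_heckeY (z : ℂ) :
    heckeHeight (heckeY z) = heckeHeight z + 2 * (2 * z.re + 1) / |z.im| := by
  rw [heckeY_eq_heckeX_add_one, heckeHeight_heckeX, heckeHeight, heckeHeight, ← add_div]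
  simp only [normSq_apply, add_re, add_im, one_re, one_im, add_zero]
  ring

theorem heckeHeight_lt_heckeHeight_heckeY {z : ℂ} (hz : z.im ≠ 0) (hre : -1 / 2 < z.re) :
    heckeHeight z < heckeHeight (heckeY z) := by
  rw [heckeHeight_heckeY, lt_add_iff_pos_right]
  exact div_pos (by linarith) (abs_pos.2 hz)

theorem heckeHeight_heckeY_lt_heckeHeight {z : ℂ} (hz : z.im ≠ 0) (hre : z.re < -1 / 2) :
    heckeHeight (heckeY z) < heckeHeight z := by
  rw [heckeHeight_heckeY, add_lt_iff_neg_left]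
  exact div_neg_of_neg_of_pos (by linarith) (abs_pos.2 hz)

end Height

section Quadruplets

theorem self_mem_quad (z : ℂ) : z ∈ quad z := Set.mem_insert _ _

theorem quad_heckeY {z : ℂ} (hz : z.im ≠ 0) : quad (heckeY z) = quad z := by
  rw [quad, quad, heckeY_iterate_four hz]
  ext w
  simp only [Set.mem_insert_iff, Set.mem_singleton_iff]
  tauto

theorem quad_eq_of_mem {z w : ℂ} (hz : z.im ≠ 0) (hw : w ∈ quad z) : quad w = quad z := by
  have hz₁ := heckeY_im_ne_zero hz
  have hz₂ := heckeY_im_ne_zero hz₁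
  rcases hw with rfl | rfl | rfl | rfl
  · rfl
  · exact quad_heckeY hz
  · rw [quad_heckeY hz₁, quad_heckeY hz]
  · rw [quad_heckeY hz₂, quad_heckeY hz₁, quad_heckeY hz]

theorem heckeY_re_neg {z : ℂ} (hre : -1 < z.re) : (heckeY z).re < 0 :=
  heckeX_re_neg_iff.2 (by rw [add_re, one_re]; linarith)

theorem neg_half_lt_heckeY_re {z : ℂ} (hz : z.im ≠ 0) (hre : 0 ≤ z.re) :
    -1 / 2 < (heckeY z).re := by
  have him : 0 < z.im ^ 2 := by positivity
  have hnorm : 0 < normSq (z + 1) := normSq_pos_of_im_ne_zero (by simpa using hz)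
  rw [heckeY_eq_heckeX_add_one, heckeX_re, div_lt_div_iff₀ two_pos (by positivity)]
  simp only [normSq_apply, add_re, add_im, one_re, one_im]
  nlinarith

theorem heckeY_iterate_three_re_le_neg_one {z : ℂ} (hz : z.im ≠ 0) (hre : 0 ≤ z.re) :
    (heckeY (heckeY (heckeY z))).re ≤ -1 := by
  have hx : (heckeX z).re ≤ 0 := by
    rw [heckeX_re]
    exact div_nonpos_of_nonpos_of_nonneg (by linarith) (by positivity [normSq_nonneg z])
  rw [heckeY_iterate_three hz, sub_re, one_re]
  linarith

theorem re_neg_of_mem_quad {z w : ℂ} (hw : w.im ≠ 0) (hre : 0 ≤ w.re) (hz : z ∈ quad w)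
    (hne : z ≠ w) : z.re < 0 := by
  rcases hz with rfl | rfl | rfl | rfl
  · exact absurd rfl hne
  · exact heckeY_re_neg (by linarith)
  · exact heckeY_re_neg (by linarith [neg_half_lt_heckeY_re hw hre])
  · linarith [heckeY_iterate_three_re_le_neg_one hw hre]

theorem heckeHeight_lt_of_mem_quad {z w : ℂ} (hw : w.im ≠ 0) (hre : 0 ≤ w.re) (hz : z ∈ quad w)
    (hne : z ≠ w) : heckeHeight w < heckeHeight z := by
  have hw₁ := heckeY_im_ne_zero hw
  have hw₃ := heckeY_im_ne_zero (heckeY_im_ne_zero hw₁)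
  have hlt₁ : heckeHeight w < heckeHeight (heckeY w) :=
    heckeHeight_lt_heckeHeight_heckeY hw (by linarith)
  rcases hz with rfl | rfl | rfl | rfl
  · exact absurd rfl hne
  · exact hlt₁
  · exact hlt₁.trans (heckeHeight_lt_heckeHeight_heckeY hw₁ (neg_half_lt_heckeY_re hw hre))
  · have hlt₄ := heckeHeight_heckeY_lt_heckeHeight hw₃
      (by linarith [heckeY_iterate_three_re_le_neg_one hw hre])
    rwa [heckeY_iterate_four hw] at hlt₄

end Quadruplets

section OrbitGraph

theorem eq_of_eqvGen_of_rightUnique {V : Type*} {r : V → V → Prop} (hr : Relator.RightUnique r)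
    {u v : V} (huv : Relation.EqvGen r u v) (hu : ∀ w, ¬r u w) (hv : ∀ w, ¬r v w) : u = v := by
  have hequiv : Equivalence (Relation.Join (Relation.ReflTransGen r)) :=
    Relation.equivalence_join_reflTransGen fun _ b _ hb hc =>
      ⟨b, .refl, hr hb hc ▸ .refl⟩
  have hle : r ≤ Relation.Join (Relation.ReflTransGen r) :=
    fun _ b hb => ⟨b, .single hb, .refl⟩
  obtain ⟨w, huw, hvw⟩ := hequiv.eqvGen_iff.1 (huv.mono hle)
  exact ((Relation.reflTransGen_iff_eq hu).1 huw).symm.trans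
    ((Relation.reflTransGen_iff_eq hv).1 hvw)

/-- The pair `{z, x(z)}` as a vertex of the orbit graph, whose vertices are the pairs (left
summand) and the quadruplets (right summand). -/
def pairVertex (z : ℂ) : Set ℂ ⊕ Set ℂ := .inl {z, heckeX z}

/-- The quadruplet `Q_z` as a vertex of the orbit graph. -/
def quadVertex (z : ℂ) : Set ℂ ⊕ Set ℂ := .inr (quad z)

/-- The oriented edges of the orbit graph: each non-real point `z` is an edge between its pair and
its quadruplet, leaving the pair if `Re z < 0` and leaving the quadruplet if `0 ≤ Re z`. -/
def OrbitArrow (u v : Set ℂ ⊕ Set ℂ) : Prop :=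
  ∃ z : ℂ, z.im ≠ 0 ∧
    (z.re < 0 ∧ u = pairVertex z ∧ v = quadVertex z ∨
      0 ≤ z.re ∧ u = quadVertex z ∧ v = pairVertex z)

theorem pairVertex_heckeX (z : ℂ) : pairVertex (heckeX z) = pairVertex z := by
  rw [pairVertex, pairVertex, heckeX_heckeX, Set.pair_comm]

theorem eq_or_eq_heckeX_of_pairVertex_eq {z w : ℂ} (h : pairVertex z = pairVertex w) :
    z = w ∨ z = heckeX w := by
  have hz : z ∈ ({w, heckeX w} : Set ℂ) := Sum.inl_injective h ▸ Set.mem_insert _ _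
  exact hz

theorem mem_quad_of_quadVertex_eq {z w : ℂ} (h : quadVertex z = quadVertex w) : z ∈ quad w :=
  Sum.inr_injective h ▸ self_mem_quad z

theorem orbitArrow_rightUnique : Relator.RightUnique OrbitArrow := by
  rintro u v v' ⟨z, hz, ⟨hre, rfl, rfl⟩ | ⟨hre, rfl, rfl⟩⟩
    ⟨w, hw, ⟨hre', heq, rfl⟩ | ⟨hre', heq, rfl⟩⟩
  · rcases eq_or_eq_heckeX_of_pairVertex_eq heq with rfl | rfl
    · rfl
    · exact absurd (heckeX_re_neg_iff.1 hre) hre'.not_gt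
  · cases heq
  · cases heq
  · have hzw : z = w := by
      by_contra hne
      exact hre.not_gt (re_neg_of_mem_quad hw hre' (mem_quad_of_quadVertex_eq heq) hne)
    rw [hzw]

theorem not_orbitArrow_pairVertex {z : ℂ} (hre : z.re = 0) (v : Set ℂ ⊕ Set ℂ) :
    ¬OrbitArrow (pairVertex z) v := by
  rintro ⟨w, -, ⟨hre', heq, -⟩ | ⟨-, heq, -⟩⟩
  · rcases eq_or_eq_heckeX_of_pairVertex_eq heq.symm with rfl | rfl
    · exact hre'.ne hre
    · exact hre'.ne (heckeX_re_eq_zero_iff.2 hre)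
  · cases heq

theorem not_orbitArrow_quadVertex {z : ℂ} (hneg : ∀ w ∈ quad z, w.re < 0) (v : Set ℂ ⊕ Set ℂ) :
    ¬OrbitArrow (quadVertex z) v := by
  rintro ⟨w, -, ⟨-, heq, -⟩ | ⟨hre', heq, -⟩⟩
  · cases heq
  · exact hre'.not_gt (hneg w (mem_quad_of_quadVertex_eq heq.symm))

theorem eqvGen_orbitArrow_pairVertex_quadVertex {z : ℂ} (hz : z.im ≠ 0) :
    Relation.EqvGen OrbitArrow (pairVertex z) (quadVertex z) := by
  rcases lt_or_ge z.re 0 with hre | hre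
  · exact .rel _ _ ⟨z, hz, .inl ⟨hre, rfl, rfl⟩⟩
  · exact .symm _ _ (.rel _ _ ⟨z, hz, .inr ⟨hre, rfl, rfl⟩⟩)

end OrbitGraph

section Qstar

variable {n : ℕ} {z w : ℂ}

theorem im_ne_zero_of_mem_Qstar (hn : 0 < n) (hz : z ∈ Qstar n) : z.im ≠ 0 := by
  obtain ⟨a, c, hc, -, -, rfl⟩ := hz
  have hn' : √(n : ℝ) ≠ 0 := by positivity
  simp [div_intCast_im, hn', hc]

theorem add_one_mem_Qstar (hz : z ∈ Qstar n) : z + 1 ∈ Qstar n := by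
  obtain ⟨a, c, hc, hc2, hdvd, rfl⟩ := hz
  refine ⟨a + c, c, hc, hc2, ?_, ?_⟩
  · have : (a + c) ^ 2 + (n : ℤ) = a ^ 2 + n + c * (2 * a + c) := by ring
    exact this ▸ dvd_add hdvd (dvd_mul_right _ _)
  · have hc' : (c : ℂ) ≠ 0 := by exact_mod_cast hc
    push_cast
    field_simp
    ring

theorem heckeX_mem_Qstar (hn : 0 < n) (hz : z ∈ Qstar n) : heckeX z ∈ Qstar n := by
  have hz0 : z ≠ 0 := fun h => im_ne_zero_of_mem_Qstar hn hz (by rw [h, zero_im])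
  obtain ⟨a, c, hc, ⟨d, hd⟩, ⟨e, he⟩, hzeq⟩ := hz
  have he0 : e ≠ 0 := by
    rintro rfl
    have : a ^ 2 + (n : ℤ) ≠ 0 := by positivity
    exact this (by rw [he, mul_zero])
  refine ⟨-a, 2 * e, by simpa using he0, dvd_mul_right _ _, ⟨d, by rw [neg_sq, he, hd]; ring⟩, ?_⟩
  have hc' : (c : ℂ) ≠ 0 := by exact_mod_cast hc
  have he' : (e : ℂ) ≠ 0 := by exact_mod_cast he0
  have hsqrt : ((√(n : ℝ) : ℝ) : ℂ) ^ 2 = n := by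
    exact_mod_cast Real.sq_sqrt n.cast_nonneg
  have hnorm : ((a : ℂ) + √(n : ℝ) * I) * (a - √(n : ℝ) * I) = c * e := by
    have heC : (a : ℂ) ^ 2 + n = c * e := by exact_mod_cast he
    linear_combination heC + hsqrt - ((√(n : ℝ) : ℝ) : ℂ) ^ 2 * I_sq
  rw [heckeX, div_eq_div_iff (by simpa using hz0) (by simpa using he'), hzeq]
  push_cast
  field_simp
  linear_combination hnorm

theorem heckeY_mem_Qstar (hn : 0 < n) (hz : z ∈ Qstar n) : heckeY z ∈ Qstar n :=
  heckeX_mem_Qstar hn (add_one_mem_Qstar hz)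

theorem exists_nat_eq_sqrt_mul_heckeHeight (hn : 0 < n) (hz : z ∈ Qstar n) :
    ∃ k : ℕ, √(n : ℝ) * heckeHeight z = k := by
  obtain ⟨a, c, hc, -, ⟨e, he⟩, rfl⟩ := hz
  have hn' : √(n : ℝ) ≠ 0 := by positivity
  have hc' : (c : ℝ) ≠ 0 := by exact_mod_cast hc
  have hnorm : normSq (((a : ℂ) + √(n : ℝ) * I) / (c : ℂ)) = e / c := by
    have heR : (a : ℝ) ^ 2 + n = c * e := by exact_mod_cast he
    have hnum : normSq ((a : ℂ) + √(n : ℝ) * I) = c * e := by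
      have := normSq_add_mul_I (a : ℝ) (√(n : ℝ))
      rw [Real.sq_sqrt n.cast_nonneg, heR] at this
      exact_mod_cast this
    rw [normSq_div, hnum, normSq_intCast]
    field_simp
  have him : |(((a : ℂ) + √(n : ℝ) * I) / (c : ℂ)).im| = √(n : ℝ) / |(c : ℝ)| := by
    simp [div_intCast_im, abs_div, abs_of_nonneg (Real.sqrt_nonneg _)]
  have hratio : 1 + 2 * ((e : ℝ) / c) = |(c : ℝ) + 2 * e| / |(c : ℝ)| := by
    have hnonneg : 0 ≤ 1 + 2 * ((e : ℝ) / c) := by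
      rw [← hnorm]
      linarith [normSq_nonneg (((a : ℂ) + √(n : ℝ) * I) / (c : ℂ))]
    rw [← abs_div, ← abs_of_nonneg hnonneg]
    congr 1
    field_simp
  refine ⟨(c + 2 * e).natAbs, ?_⟩
  rw [heckeHeight, hnorm, him, hratio, div_div_div_cancel_right₀ (abs_ne_zero.2 hc'),
    mul_div_cancel₀ _ hn', Nat.cast_natAbs]
  push_cast
  rfl

theorem exists_minimal_heckeHeight (hn : 0 < n) {S : Set ℂ} (hS : S.Nonempty)
    (hSn : S ⊆ Qstar n) : ∃ α ∈ S, ∀ β ∈ S, heckeHeight α ≤ heckeHeight β := by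
  choose! k hk using fun z (hz : z ∈ Qstar n) => exists_nat_eq_sqrt_mul_heckeHeight hn hz
  obtain ⟨α, hα, hmin⟩ := exists_minimalFor_of_wellFoundedLT (· ∈ S) k hS
  refine ⟨α, hα, fun β hβ => ?_⟩
  have hle : k α ≤ k β := (le_total (k α) (k β)).elim id (hmin hβ)
  have hsqrt : 0 < √(n : ℝ) := by positivity
  rw [← mul_le_mul_iff_right₀ hsqrt, hk α (hSn hα), hk β (hSn hβ)]
  exact_mod_cast hle

theorem sameOrbit_heckeX (hn : 0 < n) (hz : z ∈ Qstar n) : sameOrbit n z (heckeX z) :=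
  .rel _ _ ⟨hz, heckeX_mem_Qstar hn hz, .inl rfl⟩

theorem sameOrbit_heckeY (hn : 0 < n) (hz : z ∈ Qstar n) : sameOrbit n z (heckeY z) :=
  .rel _ _ ⟨hz, heckeY_mem_Qstar hn hz, .inr rfl⟩

theorem mem_Qstar_and_sameOrbit_of_mem_quad (hn : 0 < n) (hz : z ∈ Qstar n) (hw : w ∈ quad z) :
    w ∈ Qstar n ∧ sameOrbit n z w := by
  have hz₁ := heckeY_mem_Qstar hn hz
  have hz₂ := heckeY_mem_Qstar hn hz₁
  have hrel₁ := sameOrbit_heckeY hn hz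
  have hrel₂ := hrel₁.trans _ _ _ (sameOrbit_heckeY hn hz₁)
  rcases hw with rfl | rfl | rfl | rfl
  · exact ⟨hz, .refl _⟩
  · exact ⟨hz₁, hrel₁⟩
  · exact ⟨hz₂, hrel₂⟩
  · exact ⟨heckeY_mem_Qstar hn hz₂, hrel₂.trans _ _ _ (sameOrbit_heckeY hn hz₂)⟩

theorem eqvGen_orbitArrow_of_sameOrbit (hn : 0 < n) (h : sameOrbit n z w) :
    Relation.EqvGen OrbitArrow (quadVertex z) (quadVertex w) := by
  induction h with
  | rel u v huv =>
    obtain ⟨hu, hv, rfl | rfl⟩ := huv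
    · have hpair := eqvGen_orbitArrow_pairVertex_quadVertex (im_ne_zero_of_mem_Qstar hn hv)
      rw [pairVertex_heckeX] at hpair
      exact ((eqvGen_orbitArrow_pairVertex_quadVertex
        (im_ne_zero_of_mem_Qstar hn hu)).symm _ _).trans _ _ _ hpair
    · rw [quadVertex, quadVertex, quad_heckeY (im_ne_zero_of_mem_Qstar hn hu)]
      exact .refl _
  | refl => exact .refl _
  | symm _ _ _ ih => exact ih.symm
  | trans _ _ _ _ _ ih₁ ih₂ => exact ih₁.trans _ _ _ ih₂

theorem exists_re_eq_zero_or_quad_re_neg (hn : 0 < n) {γ : ℂ} (hγ : γ ∈ Qstar n) :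
    (∃ α ∈ Qstar n, sameOrbit n γ α ∧ α.re = 0) ∨
      ∃ α ∈ Qstar n, sameOrbit n γ α ∧ ∀ z ∈ quad α, z.re < 0 := by
  obtain ⟨α, ⟨hα, hγα⟩, hmin⟩ := exists_minimal_heckeHeight hn
    (S := {z | z ∈ Qstar n ∧ sameOrbit n γ z}) ⟨γ, hγ, .refl _⟩ fun _ hz => hz.1
  obtain ⟨β, hβ, hγβ, hheight, hre⟩ : ∃ β ∈ Qstar n, sameOrbit n γ β ∧
      heckeHeight β = heckeHeight α ∧ β.re ≤ 0 := by
    rcases le_or_gt α.re 0 with hre | hre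
    · exact ⟨α, hα, hγα, rfl, hre⟩
    · exact ⟨heckeX α, heckeX_mem_Qstar hn hα, hγα.trans _ _ _ (sameOrbit_heckeX hn hα),
        heckeHeight_heckeX α, (heckeX_re_neg_iff.2 hre).le⟩
  rcases hre.eq_or_lt with hre | hre
  · exact .inl ⟨β, hβ, hγβ, hre⟩
  refine .inr ⟨β, hβ, hγβ, fun w hw => ?_⟩
  by_contra! hw0
  obtain ⟨hwn, hβw⟩ := mem_Qstar_and_sameOrbit_of_mem_quad hn hβ hw
  have hβ_mem : β ∈ quad w :=
    quad_eq_of_mem (im_ne_zero_of_mem_Qstar hn hβ) hw ▸ self_mem_quad β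
  have hlt : heckeHeight w < heckeHeight β :=
    heckeHeight_lt_of_mem_quad (im_ne_zero_of_mem_Qstar hn hwn) hw0 hβ_mem
      (by rintro rfl; linarith)
  exact (hheight ▸ hlt).not_ge (hmin w ⟨hwn, hγβ.trans _ _ _ hβw⟩)

theorem pairVertex_eq_of_sameOrbit (hn : 0 < n) (hz : z ∈ Qstar n) (hw : w ∈ Qstar n)
    (h : sameOrbit n z w) (hz0 : z.re = 0) (hw0 : w.re = 0) : pairVertex z = pairVertex w :=
  eq_of_eqvGen_of_rightUnique orbitArrow_rightUnique
    (((eqvGen_orbitArrow_pairVertex_quadVertex (im_ne_zero_of_mem_Qstar hn hz)).trans _ _ _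
      (eqvGen_orbitArrow_of_sameOrbit hn h)).trans _ _ _
        ((eqvGen_orbitArrow_pairVertex_quadVertex (im_ne_zero_of_mem_Qstar hn hw)).symm _ _))
    (not_orbitArrow_pairVertex hz0) (not_orbitArrow_pairVertex hw0)

theorem quad_eq_of_sameOrbit (hn : 0 < n) (h : sameOrbit n z w) (hz : ∀ u ∈ quad z, u.re < 0)
    (hw : ∀ u ∈ quad w, u.re < 0) : quad z = quad w :=
  Sum.inr_injective <| eq_of_eqvGen_of_rightUnique orbitArrow_rightUnique
    (eqvGen_orbitArrow_of_sameOrbit hn h) (not_orbitArrow_quadVertex hz)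
    (not_orbitArrow_quadVertex hw)

theorem not_quad_re_neg_of_sameOrbit (hn : 0 < n) (hz : z ∈ Qstar n) (h : sameOrbit n z w)
    (hz0 : z.re = 0) : ¬∀ u ∈ quad w, u.re < 0 := fun hw =>
  Sum.inl_ne_inr <| eq_of_eqvGen_of_rightUnique orbitArrow_rightUnique
    ((eqvGen_orbitArrow_pairVertex_quadVertex (im_ne_zero_of_mem_Qstar hn hz)).trans _ _ _
      (eqvGen_orbitArrow_of_sameOrbit hn h))
    (not_orbitArrow_pairVertex hz0) (not_orbitArrow_quadVertex hw)

theorem setOf_sameOrbit_re_eq_zero (hn : 0 < n) {γ α : ℂ} (hα : α ∈ Qstar n)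
    (hγα : sameOrbit n γ α) (hα0 : α.re = 0) :
    {z | z ∈ Qstar n ∧ sameOrbit n γ z ∧ z.re = 0} = {α, heckeX α} := by
  refine Set.Subset.antisymm ?_ ?_
  · rintro z ⟨hz, hγz, hz0⟩
    exact eq_or_eq_heckeX_of_pairVertex_eq
      (pairVertex_eq_of_sameOrbit hn hz hα ((hγz.symm _ _).trans _ _ _ hγα) hz0 hα0)
  · rintro z (rfl | rfl)
    · exact ⟨hα, hγα, hα0⟩
    · exact ⟨heckeX_mem_Qstar hn hα, hγα.trans _ _ _ (sameOrbit_heckeX hn hα),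
        heckeX_re_eq_zero_iff.2 hα0⟩

end Qstar

theorem stmt14_general (n : ℕ) (hn : 0 < n) (γ : ℂ) (hγ : γ ∈ Qstar n) :
    ((∃ α ∈ Qstar n, sameOrbit n γ α ∧ α.re = 0) ∨
      (∃ α ∈ Qstar n, sameOrbit n γ α ∧ ∀ z ∈ quad α, z.re < 0)) ∧
    ¬((∃ α ∈ Qstar n, sameOrbit n γ α ∧ α.re = 0) ∧
      (∃ α ∈ Qstar n, sameOrbit n γ α ∧ ∀ z ∈ quad α, z.re < 0)) ∧
    ((∃ α ∈ Qstar n, sameOrbit n γ α ∧ α.re = 0) →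
      ∃ α ∈ Qstar n, sameOrbit n γ α ∧ α.re = 0 ∧
        {z | z ∈ Qstar n ∧ sameOrbit n γ z ∧ z.re = 0} = {α, heckeX α}) ∧
    (∀ α ∈ Qstar n, ∀ α' ∈ Qstar n, sameOrbit n γ α → sameOrbit n γ α' →
      (∀ z ∈ quad α, z.re < 0) → (∀ z ∈ quad α', z.re < 0) →
      quad α = quad α') := by
  refine ⟨exists_re_eq_zero_or_quad_re_neg hn hγ, ?_, ?_, ?_⟩
  · rintro ⟨⟨α, hα, hγα, hα0⟩, β, -, hγβ, hβ⟩
    exact not_quad_re_neg_of_sameOrbit hn hα ((hγα.symm _ _).trans _ _ _ hγβ) hα0 hβ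
  · rintro ⟨α, hα, hγα, hα0⟩
    exact ⟨α, hα, hγα, hα0, setOf_sameOrbit_re_eq_zero hn hα hγα hα0⟩
  · intro α _ α' _ hγα hγα' hneg hneg'
    exact quad_eq_of_sameOrbit hn ((hγα.symm _ _).trans _ _ _ hγα') hneg hneg'

theorem stmt14 (n : ℕ) (hn : 0 < n) (heven : Even n) (hsf : Squarefree n)
    (γ : ℂ) (hγ : γ ∈ Qstar n) :
    ((∃ α ∈ Qstar n, sameOrbit n γ α ∧ α.re = 0) ∨
      (∃ α ∈ Qstar n, sameOrbit n γ α ∧ ∀ z ∈ quad α, z.re < 0)) ∧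
    ¬((∃ α ∈ Qstar n, sameOrbit n γ α ∧ α.re = 0) ∧
      (∃ α ∈ Qstar n, sameOrbit n γ α ∧ ∀ z ∈ quad α, z.re < 0)) ∧
    ((∃ α ∈ Qstar n, sameOrbit n γ α ∧ α.re = 0) →
      ∃ α ∈ Qstar n, sameOrbit n γ α ∧ α.re = 0 ∧
        {z | z ∈ Qstar n ∧ sameOrbit n γ z ∧ z.re = 0} = {α, heckeX α}) ∧
    (∀ α ∈ Qstar n, ∀ α' ∈ Qstar n, sameOrbit n γ α → sameOrbit n γ α' →
      (∀ z ∈ quad α, z.re < 0) → (∀ z ∈ quad α', z.re < 0) →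
      quad α = quad α') :=
  stmt14_general n hn γ hγ
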